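/- For every integer d ≥ 2 and every d-weighting α of a finite rooted tree Γ, any two distinct members of ⋃_{q∈V} Γ_α(q) have at most one edge of Γ in common. (Property 2(a) of the Proposition on linear-proximity structures.) -/

import Mathlib

/-- A finite rooted tree: a distinguished root, a parent map fixing the root,
and a depth function witnessing that iterating the parent map reaches the root. -/
structure PTree (V : Type) where
  root : V
  parent : V → V
  depth : V → ℕ
  parent_root : parent root = root
  depth_root : depth root = 0
  depth_eq : ∀ v, v ≠ root → depth v = depth (parent v) + 1

namespace PTree

variable {V : Type}

/-- `r ⪰ q` : the descendancy order (`q` lies on the path from `r` to the root). -/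
def desc (T : PTree V) (r q : V) : Prop := ∃ k : ℕ, T.parent^[k] r = q

/-- `r ≻ q`. -/
def sdesc (T : PTree V) (r q : V) : Prop := T.desc r q ∧ r ≠ q

/-- `r ∈ q⁺` : `r` is a child of `q`. -/
def child (T : PTree V) (r q : V) : Prop := T.parent r = q ∧ r ≠ T.root

/-- `w` is a d-weighting of `T` : each non-root vertex gets a weight in `{1,…,d}`,
and distinct children of a common vertex get distinct weights. -/
def IsWeighting (T : PTree V) (d : ℕ) (w : V → ℕ) : Prop :=
  (∀ v, v ≠ T.root → 1 ≤ w v ∧ w v ≤ d) ∧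
    ∀ r s, r ≠ T.root → s ≠ T.root → T.parent r = T.parent s → r ≠ s → w r ≠ w s

/-- The length of the path (code) from `q` up to a descendant `r`. -/
def codeLen (T : PTree V) (r q : V) : ℕ := T.depth r - T.depth q

/-- The code of `r` over `q` has the form `(a, b, b, …, b)` : the first entry is `a` and
every later entry is `b`.  (The `j`-th entry of the code, `1 ≤ j ≤ k`, is the weight of
`parent^[k-j] r`, where `k` is the code length.) -/
def codeAB (T : PTree V) (w : V → ℕ) (q : V) (a b : ℕ) (r : V) : Prop :=
  w (T.parent^[T.codeLen r q - 1] r) = a ∧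
    ∀ i, i + 2 ≤ T.codeLen r q → w (T.parent^[i] r) = b

/-- `Γ_q(a,b)` : the vertex `q` together with all descendants `r ≻ q` whose code over `q`
has the form `(a,b,b,…,b)` or `(b,a,a,…,a)`. -/
def gammaSet (T : PTree V) (w : V → ℕ) (q : V) (a b : ℕ) : Set V :=
  {r | r = q ∨ (T.sdesc r q ∧ (T.codeAB w q a b r ∨ T.codeAB w q b a r))}

/-- `Γ(q)` : the family of the sets `Γ_q(a,b)`, `a ≠ b` in `{1,…,d}`, which are maximal
under inclusion among all such sets. -/
def gammaFam (T : PTree V) (w : V → ℕ) (d : ℕ) (q : V) : Set (Set V) :=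
  {S | ∃ a b : ℕ, a ≠ b ∧ 1 ≤ a ∧ a ≤ d ∧ 1 ≤ b ∧ b ≤ d ∧ S = T.gammaSet w q a b ∧
    ∀ a' b' : ℕ, a' ≠ b' → 1 ≤ a' → a' ≤ d → 1 ≤ b' → b' ≤ d →
      S ⊆ T.gammaSet w q a' b' → S = T.gammaSet w q a' b'}

/-- `S` is a chain rooted at `q` : it contains `q`, consists of descendants of `q`, is
closed under taking parents (down to `q`), and is totally ordered by descendancy. -/
def IsChainAt (T : PTree V) (q : V) (S : Set V) : Prop :=
  q ∈ S ∧ (∀ r ∈ S, T.desc r q) ∧ (∀ r ∈ S, r ≠ q → T.parent r ∈ S) ∧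
    ∀ r ∈ S, ∀ s ∈ S, T.desc r s ∨ T.desc s r

/-- `S` is a bi-chain rooted at `q` : the union of two chains rooted at `q`, each with at
least two vertices, whose only common vertex is `q`. -/
def IsBichainAt (T : PTree V) (q : V) (S : Set V) : Prop :=
  ∃ S₁ S₂ : Set V, T.IsChainAt q S₁ ∧ T.IsChainAt q S₂ ∧ S = S₁ ∪ S₂ ∧
    S₁ ∩ S₂ = {q} ∧ (∃ r ∈ S₁, r ≠ q) ∧ (∃ r ∈ S₂, r ≠ q)

end PTree

/-!
An edge of `Γ_q(a,b)` not incident to `q` has a code over `q` that starts with one of `a`, `b` and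
is constantly the other from the second entry on. If two of these sets share an edge, their roots
`q`, `q'` lie on one path. If `q'` is a proper descendant of `q`, the code over `q` of a common edge
is constant beyond `q'`, while the code over `q'` would have to change after its first entry; hence
every common edge joins `q'` to a child, and the first entry over `q` decides which of `a`, `b` is
the weight of that child. If `q = q'`, a common edge away from the root, or two common edges at the
root, would determine the pair `{a,b}` and so make the two sets equal.
-/

namespace PTree

variable {V : Type} {T : PTree V} {w : V → ℕ} {q q' r v : V} {a b a' b' : ℕ}

/-- The weights `w` distinguish any two children of a common vertex. This is the part of
`IsWeighting` that does not involve the range of the weights. -/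
def SeparatesSiblings (T : PTree V) (w : V → ℕ) : Prop :=
  ∀ r s, r ≠ T.root → s ≠ T.root → T.parent r = T.parent s → r ≠ s → w r ≠ w s

/-- The edges of the tree with both ends in `S`, the edge `{v, parent v}` being encoded by its
endpoint `v` farther from the root of the tree. -/
def edgesIn (T : PTree V) (S : Set V) : Set V :=
  {v | v ≠ T.root ∧ v ∈ S ∧ T.parent v ∈ S}

/-- The child of `q` on the path from `q` to a proper descendant `v`; its weight is the first entry
of the code of `v` over `q`. -/
def childToward (T : PTree V) (q v : V) : V :=
  T.parent^[T.codeLen v q - 1] v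

theorem eq_root_of_depth_eq_zero (h : T.depth v = 0) : v = T.root := by
  by_contra hv
  exact Nat.succ_ne_zero _ ((T.depth_eq v hv).symm.trans h)

theorem depth_parent (T : PTree V) (v : V) : T.depth (T.parent v) = T.depth v - 1 := by
  by_cases hv : v = T.root
  · rw [hv, T.parent_root, T.depth_root]
  · rw [T.depth_eq v hv, Nat.add_sub_cancel]

theorem depth_iterate_parent (T : PTree V) (k : ℕ) (v : V) :
    T.depth (T.parent^[k] v) = T.depth v - k := by
  induction k with
  | zero => rfl
  | succ k ih => rw [Function.iterate_succ_apply', depth_parent, ih, Nat.sub_sub]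

theorem desc_refl (T : PTree V) (v : V) : T.desc v v := ⟨0, rfl⟩

theorem depth_le_of_desc (h : T.desc r q) : T.depth q ≤ T.depth r := by
  obtain ⟨k, rfl⟩ := h
  rw [depth_iterate_parent]
  exact Nat.sub_le _ _

theorem iterate_parent_codeLen (h : T.desc r q) : T.parent^[T.codeLen r q] r = q := by
  obtain ⟨k, rfl⟩ := h
  rw [codeLen, depth_iterate_parent]
  rcases le_total k (T.depth r) with hk | hk
  · rw [Nat.sub_sub_self hk]
  · have iterate_eq_root : ∀ j, T.depth r ≤ j → T.parent^[j] r = T.root := fun j hj =>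
      eq_root_of_depth_eq_zero (by rw [depth_iterate_parent, Nat.sub_eq_zero_of_le hj])
    rw [iterate_eq_root k hk, iterate_eq_root _ (by omega)]

theorem eq_of_desc_of_depth_eq (h : T.desc r q) (h' : T.desc r q')
    (hdepth : T.depth q = T.depth q') : q = q' := by
  rw [← iterate_parent_codeLen h, ← iterate_parent_codeLen h', codeLen, codeLen, hdepth]

theorem eq_or_depth_lt_of_desc (h : T.desc r q) : r = q ∨ T.depth q < T.depth r :=
  (depth_le_of_desc h).eq_or_lt.imp_left fun hdepth =>
    eq_of_desc_of_depth_eq (desc_refl T r) h hdepth.symm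

theorem childToward_parent (h : T.depth q < T.depth (T.parent v)) :
    T.childToward q (T.parent v) = T.childToward q v := by
  have hlen : T.codeLen v q - 1 = T.codeLen (T.parent v) q - 1 + 1 := by
    rw [depth_parent] at h
    rw [codeLen, codeLen, depth_parent]
    omega
  rw [childToward, childToward, hlen, Function.iterate_succ_apply]

theorem gammaSet_comm (T : PTree V) (w : V → ℕ) (q : V) (a b : ℕ) :
    T.gammaSet w q a b = T.gammaSet w q b a := by
  simp only [gammaSet, or_comm]

theorem gammaSet_eq_of_sym2_eq (T : PTree V) (w : V → ℕ) (q : V) (h : s(a, b) = s(a', b')) :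
    T.gammaSet w q a b = T.gammaSet w q a' b' := by
  rcases Sym2.eq_iff.mp h with ⟨rfl, rfl⟩ | ⟨rfl, rfl⟩
  · rfl
  · exact gammaSet_comm T w q a b

theorem desc_of_mem_gammaSet (h : r ∈ T.gammaSet w q a b) : T.desc r q := by
  rcases h with rfl | ⟨⟨hdesc, -⟩, -⟩
  · exact desc_refl T r
  · exact hdesc

theorem depth_lt_of_mem_edgesIn_gammaSet (hv : v ∈ T.edgesIn (T.gammaSet w q a b)) :
    T.depth q < T.depth v := by
  obtain ⟨hroot, -, hparent⟩ := hv
  rw [T.depth_eq v hroot]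
  exact Nat.lt_succ_of_le (depth_le_of_desc (desc_of_mem_gammaSet hparent))

theorem codeAB_or_codeAB_of_mem_edgesIn_gammaSet (hv : v ∈ T.edgesIn (T.gammaSet w q a b)) :
    T.codeAB w q a b v ∨ T.codeAB w q b a v := by
  rcases hv.2.1 with rfl | ⟨-, hcode⟩
  · exact absurd (depth_lt_of_mem_edgesIn_gammaSet hv) (lt_irrefl _)
  · exact hcode

theorem weight_mem_of_parent_eq (hv : v ∈ T.edgesIn (T.gammaSet w q a b))
    (hparent : T.parent v = q) : w v ∈ s(a, b) := by
  have hfirst : T.childToward q v = v := by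
    rw [childToward, codeLen, ← hparent, T.depth_eq v hv.1, Nat.add_sub_cancel_left]
    rfl
  rw [Sym2.mem_iff, ← hfirst]
  exact (codeAB_or_codeAB_of_mem_edgesIn_gammaSet hv).imp And.left And.left

theorem weight_childToward_pair_eq (hv : v ∈ T.edgesIn (T.gammaSet w q a b))
    (hlt : T.depth q < T.depth (T.parent v)) : s(w (T.childToward q v), w v) = s(a, b) := by
  have hlen : 0 + 2 ≤ T.codeLen v q := by
    rw [depth_parent] at hlt
    rw [codeLen]
    omega
  rw [Sym2.eq_iff]
  exact (codeAB_or_codeAB_of_mem_edgesIn_gammaSet hv).imp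
    (fun hcode => ⟨hcode.1, hcode.2 0 hlen⟩) (fun hcode => ⟨hcode.1, hcode.2 0 hlen⟩)

theorem weight_childToward_eq_of_depth_lt (hv : v ∈ T.edgesIn (T.gammaSet w q a b))
    (hq : T.depth q < T.depth q') (hq' : T.depth q' < T.depth v) :
    w (T.childToward q' v) = w v := by
  have hlast : 0 + 2 ≤ T.codeLen v q := by rw [codeLen]; omega
  have hfirst : T.codeLen v q' - 1 + 2 ≤ T.codeLen v q := by rw [codeLen, codeLen]; omega
  rcases codeAB_or_codeAB_of_mem_edgesIn_gammaSet hv with hcode | hcode <;>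
    exact (hcode.2 _ hfirst).trans (hcode.2 0 hlast).symm

theorem parent_eq_of_mem_edgesIn_of_depth_lt (hab' : a' ≠ b') (hq : T.depth q < T.depth q')
    (hv : v ∈ T.edgesIn (T.gammaSet w q a b)) (hv' : v ∈ T.edgesIn (T.gammaSet w q' a' b')) :
    T.parent v = q' := by
  refine (eq_or_depth_lt_of_desc (desc_of_mem_gammaSet hv'.2.2)).resolve_right fun hlt => hab' ?_
  have hpair := weight_childToward_pair_eq hv' hlt
  rw [weight_childToward_eq_of_depth_lt hv hq (depth_lt_of_mem_edgesIn_gammaSet hv')] at hpair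
  exact Sym2.mk_isDiag_iff.mp (hpair ▸ Sym2.mk_isDiag_iff.mpr rfl)

theorem subsingleton_common_edges_of_depth_lt (hw : T.SeparatesSiblings w) (hab' : a' ≠ b')
    (hq : T.depth q < T.depth q') :
    (T.edgesIn (T.gammaSet w q a b) ∩ T.edgesIn (T.gammaSet w q' a' b')).Subsingleton := by
  rintro u ⟨hu, hu'⟩ v ⟨hv, hv'⟩
  have hparent_u : T.parent u = q' := parent_eq_of_mem_edgesIn_of_depth_lt hab' hq hu hu'
  have hparent_v : T.parent v = q' := parent_eq_of_mem_edgesIn_of_depth_lt hab' hq hv hv'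
  have pair_eq : ∀ x ∈ T.edgesIn (T.gammaSet w q a b), T.parent x = q' →
      s(w (T.childToward q q'), w x) = s(a, b) := by
    rintro x hx rfl
    rw [childToward_parent hq, weight_childToward_pair_eq hx hq]
  have hweight : w u = w v :=
    Sym2.congr_right.mp ((pair_eq u hu hparent_u).trans (pair_eq v hv hparent_v).symm)
  by_contra hne
  exact hw u v hu.1 hv.1 (hparent_u.trans hparent_v.symm) hne hweight

theorem parent_eq_of_mem_edgesIn_of_gammaSet_ne
    (hne : T.gammaSet w q a b ≠ T.gammaSet w q a' b')
    (hv : v ∈ T.edgesIn (T.gammaSet w q a b)) (hv' : v ∈ T.edgesIn (T.gammaSet w q a' b')) :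
    T.parent v = q :=
  (eq_or_depth_lt_of_desc (desc_of_mem_gammaSet hv.2.2)).resolve_right fun hlt =>
    hne <| gammaSet_eq_of_sym2_eq T w q <|
      (weight_childToward_pair_eq hv hlt).symm.trans (weight_childToward_pair_eq hv' hlt)

theorem subsingleton_common_edges_of_gammaSet_ne (hw : T.SeparatesSiblings w)
    (hne : T.gammaSet w q a b ≠ T.gammaSet w q a' b') :
    (T.edgesIn (T.gammaSet w q a b) ∩ T.edgesIn (T.gammaSet w q a' b')).Subsingleton := by
  rintro u ⟨hu, hu'⟩ v ⟨hv, hv'⟩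
  have hparent_u : T.parent u = q := parent_eq_of_mem_edgesIn_of_gammaSet_ne hne hu hu'
  have hparent_v : T.parent v = q := parent_eq_of_mem_edgesIn_of_gammaSet_ne hne hv hv'
  by_contra huv
  have hweight : w u ≠ w v := hw u v hu.1 hv.1 (hparent_u.trans hparent_v.symm) huv
  exact hne <| gammaSet_eq_of_sym2_eq T w q <| Sym2.eq_of_ne_mem hweight
    (weight_mem_of_parent_eq hu hparent_u) (weight_mem_of_parent_eq hv hparent_v)
    (weight_mem_of_parent_eq hu' hparent_u) (weight_mem_of_parent_eq hv' hparent_v)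

end PTree

theorem gammaFam_share_at_most_one_edge_general {V : Type} {T : PTree V} {w : V → ℕ}
    (hw : T.SeparatesSiblings w) {q q' : V} {a b a' b' : ℕ} (hab : a ≠ b) (hab' : a' ≠ b')
    (hne : T.gammaSet w q a b ≠ T.gammaSet w q' a' b') :
    (T.edgesIn (T.gammaSet w q a b) ∩ T.edgesIn (T.gammaSet w q' a' b')).Subsingleton := by
  rcases lt_trichotomy (T.depth q) (T.depth q') with hlt | heq | hgt
  · exact PTree.subsingleton_common_edges_of_depth_lt hw hab' hlt
  · intro v hv
    obtain rfl : q = q' := PTree.eq_of_desc_of_depth_eq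
      (PTree.desc_of_mem_gammaSet hv.1.2.1) (PTree.desc_of_mem_gammaSet hv.2.2.1) heq
    exact PTree.subsingleton_common_edges_of_gammaSet_ne hw hne hv
  · rw [Set.inter_comm]
    exact PTree.subsingleton_common_edges_of_depth_lt hw hab hgt

/-- For every `d ≥ 2` and every `d`-weighting `α` of a finite rooted
tree, any two distinct members of `⋃_{q} Γ_α(q)` have at most one edge of `Γ` in common.
(An edge is determined by its lower vertex `v ≠ root`, the edge being `{v, parent v}`.) -/
theorem gammaFam_share_at_most_one_edge {V : Type} [Fintype V] (T : PTree V)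
    (d : ℕ) (hd : 2 ≤ d) (w : V → ℕ) (hw : T.IsWeighting d w) :
    ∀ q q' : V, ∀ S S' : Set V, S ∈ T.gammaFam w d q → S' ∈ T.gammaFam w d q' → S ≠ S' →
      ∀ v v' : V,
        v ≠ T.root → v ∈ S → T.parent v ∈ S → v ∈ S' → T.parent v ∈ S' →
        v' ≠ T.root → v' ∈ S → T.parent v' ∈ S → v' ∈ S' → T.parent v' ∈ S' →
        v = v' := by
  rintro q q' _ _ ⟨a, b, hab, -, -, -, -, rfl, -⟩ ⟨a', b', hab', -, -, -, -, rfl, -⟩ hne u v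
    hu hu₁ hpu₁ hu₂ hpu₂ hv hv₁ hpv₁ hv₂ hpv₂
  exact gammaFam_share_at_most_one_edge_general hw.2 hab hab' hne
    ⟨⟨hu, hu₁, hpu₁⟩, ⟨hu, hu₂, hpu₂⟩⟩ ⟨⟨hv, hv₁, hpv₁⟩, ⟨hv, hv₂, hpv₂⟩⟩
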